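/- Let B be a supersoluble brace and let p be a prime. Then U_p^+(B) = U_p^·(B), and this set is an ideal of B. -/

import Mathlib

/-- A (skew left) brace: a set with an additive group structure (not necessarily abelian)
and a multiplicative group structure sharing the same identity, satisfying the skew
distributive law `a * (b + c) = a * b + -a + a * c`. -/
class SkewBrace (B : Type*) extends AddGroup B, Group B where
  one_eq_zero : (1 : B) = (0 : B)
  skew_distrib : ∀ a b c : B, a * (b + c) = a * b + -a + a * c

/-- A group is supersoluble if it has a finite chain of normal subgroups with all
factors cyclic. -/
def Group.IsSupersoluble (G : Type*) [Group G] : Prop :=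
  ∃ (n : ℕ) (H : ℕ → Subgroup G),
    H 0 = ⊥ ∧ H n = ⊤ ∧ (∀ i, (H i).Normal) ∧ (∀ i, i < n → H i ≤ H (i + 1)) ∧
    ∀ i, i < n → ∃ x ∈ H (i + 1), ∀ y ∈ H (i + 1), ∃ k : ℤ, (x ^ k)⁻¹ * y ∈ H i

namespace SkewBrace

variable {B : Type*} [SkewBrace B]

/-- `lam a b = -a + a * b`, i.e. `λ_a(b)`. -/
def lam (a b : B) : B := -a + a * b

/-- the star operation `a ∗ b = λ_a(b) - b`. -/
def starOp (a b : B) : B := lam a b + -b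

/-- the additive commutator `[a,b]_+`. -/
def addCommutator (a b : B) : B := -a + -b + a + b

/-- A subbrace of `B`: a subset that is a subgroup of both `(B,+)` and `(B,·)`. -/
structure Subbrace (B : Type*) [SkewBrace B] where
  carrier : Set B
  zero_mem : (0 : B) ∈ carrier
  add_mem : ∀ {a b : B}, a ∈ carrier → b ∈ carrier → a + b ∈ carrier
  neg_mem : ∀ {a : B}, a ∈ carrier → -a ∈ carrier
  mul_mem : ∀ {a b : B}, a ∈ carrier → b ∈ carrier → a * b ∈ carrier
  inv_mem : ∀ {a : B}, a ∈ carrier → a⁻¹ ∈ carrier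

/-- An ideal of `B`: a subbrace that is normal in `(B,+)` and in `(B,·)` and is
invariant under all the maps `λ_b`. -/
structure BraceIdeal (B : Type*) [SkewBrace B] extends Subbrace B where
  addConj_mem : ∀ (b : B) {a : B}, a ∈ carrier → b + a + -b ∈ carrier
  mulConj_mem : ∀ (b : B) {a : B}, a ∈ carrier → b * a * b⁻¹ ∈ carrier
  lam_mem : ∀ (b : B) {a : B}, a ∈ carrier → lam b a ∈ carrier

/-- The additive subgroup underlying a subbrace. -/
def Subbrace.addSubgroup (S : Subbrace B) : AddSubgroup B where
  carrier := S.carrier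
  zero_mem' := S.zero_mem
  add_mem' := S.add_mem
  neg_mem' := S.neg_mem

/-- The multiplicative subgroup underlying a subbrace. -/
def Subbrace.subgroup (S : Subbrace B) : Subgroup B where
  carrier := S.carrier
  one_mem' := by rw [one_eq_zero]; exact S.zero_mem
  mul_mem' := S.mul_mem
  inv_mem' := S.inv_mem

/-- Given ideals `J ≤ I` of `B`, `MemSocQuotRel I J x` says that the coset of `x`
lies in `Soc(I/J) = Ker(λ) ∩ Z(I/J, +)` (for `I = B` take `I = Set.univ`). -/
def MemSocQuotRel (I J : Set B) (x : B) : Prop :=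
  x ∈ I ∧ (∀ y ∈ I, -y + lam x y ∈ J) ∧ ∀ y ∈ I, -(y + x) + (x + y) ∈ J

/-- Given ideals `J ≤ I` of `B`, `MemZetaQuotRel I J x` says that the coset of `x`
lies in `ζ(I/J) = Soc(I/J) ∩ Z(I/J, ·)`. -/
def MemZetaQuotRel (I J : Set B) (x : B) : Prop :=
  MemSocQuotRel I J x ∧ ∀ y ∈ I, (y * x)⁻¹ * (x * y) ∈ J

/-- The coset of `x` lies in `Soc(B/J)`. -/
def MemSocQuot (J : Set B) (x : B) : Prop := MemSocQuotRel Set.univ J x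

/-- The coset of `x` lies in `ζ(B/J)`. -/
def MemZetaQuot (J : Set B) (x : B) : Prop := MemZetaQuotRel Set.univ J x

/-- For ideals `I ≤ J`, the additive group of the quotient `J/I` is infinite cyclic. -/
def QuotAddInfCyclic (I J : Set B) : Prop :=
  ∃ x ∈ J, (∀ y ∈ J, ∃ n : ℤ, -(n • x) + y ∈ I) ∧ ∀ n : ℤ, n • x ∈ I → n = 0

/-- For ideals `I ≤ J`, the quotient `J/I` has prime order `p`. -/
def QuotPrimeOrder (I J : Set B) (p : ℕ) : Prop :=
  p.Prime ∧ ∃ x ∈ J, x ∉ I ∧ p • x ∈ I ∧ ∀ y ∈ J, ∃ n : ℤ, -(n • x) + y ∈ I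

/-- A brace is supersoluble if it has a finite chain of ideals each factor of which
either is additively infinite cyclic and contained in the socle of the corresponding
quotient, or has prime order. -/
def IsSupersoluble (B : Type*) [SkewBrace B] : Prop :=
  ∃ (n : ℕ) (I : ℕ → BraceIdeal B),
    (I 0).carrier = {0} ∧ (I n).carrier = Set.univ ∧
    (∀ i, i < n → (I i).carrier ⊆ (I (i + 1)).carrier) ∧
    ∀ i, i < n →
      (QuotAddInfCyclic (I i).carrier (I (i + 1)).carrier ∧
        ∀ x ∈ (I (i + 1)).carrier, MemSocQuot (I i).carrier x) ∨
      ∃ p : ℕ, QuotPrimeOrder (I i).carrier (I (i + 1)).carrier p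

/-- The upper socle series of the brace (carrier of the ideal) `I`. -/
def socChainRel (I : Set B) : ℕ → Set B
  | 0 => {0}
  | n + 1 => {x | MemSocQuotRel I (socChainRel I n) x}

/-- The upper central series of the brace (carrier of the ideal) `I`. -/
def zetaChainRel (I : Set B) : ℕ → Set B
  | 0 => {0}
  | n + 1 => {x | MemZetaQuotRel I (zetaChainRel I n) x}

/-- The upper socle series `Soc_n(B)` of `B`. -/
def socChain (B : Type*) [SkewBrace B] : ℕ → Set B := socChainRel Set.univ

/-- The upper central series `ζ_n(B)` of `B`. -/
def zetaChain (B : Type*) [SkewBrace B] : ℕ → Set B := zetaChainRel Set.univ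

/-- A brace is centrally nilpotent if its upper central series reaches `B`. -/
def IsCentrallyNilpotent (B : Type*) [SkewBrace B] : Prop :=
  ∃ m : ℕ, zetaChain B m = Set.univ

end SkewBrace

namespace SkewBrace

/-- `U_p^+(B)`: the elements of `B` whose additive order is finite and divisible
only by primes `q > p`. -/
def Uadd (p : ℕ) (B : Type*) [SkewBrace B] : Set B :=
  {x | addOrderOf x ≠ 0 ∧ ∀ q : ℕ, q.Prime → q ∣ addOrderOf x → p < q}

/-- `U_p^·(B)`: the elements of `B` whose multiplicative order is finite and divisible
only by primes `q > p`. -/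
def Umul (p : ℕ) (B : Type*) [SkewBrace B] : Set B :=
  {x | orderOf x ≠ 0 ∧ ∀ q : ℕ, q.Prime → q ∣ orderOf x → p < q}


section helpers

theorem pow_index_mul_of_central {G : Type*} [Group G] (H : Subgroup G)
    (hc : ∀ h ∈ H, ∀ g : G, g * h = h * g) (hi : H.index ≠ 0) (x y : G) :
    (x * y) ^ H.index = x ^ H.index * y ^ H.index := by
  have : H.FiniteIndex := ⟨hi⟩
  have : IsMulCommutative H := ⟨⟨fun a b => Subtype.ext (hc b.1 b.2 a.1)⟩⟩
  have key : ∀ (g : G) (k : ℕ) (g₀ : G), g₀⁻¹ * g ^ k * g₀ ∈ H → g₀⁻¹ * g ^ k * g₀ = g ^ k := by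
    intro g k g₀ h
    have h1 := hc _ h g₀
    have h2 : g ^ k * g₀ = g₀⁻¹ * g ^ k * g₀ * g₀ := by
      rw [← h1]; group
    exact (mul_right_cancel h2).symm
  open scoped IsMulCommutative in
  have e := fun g => MonoidHom.transfer_eq_pow (MonoidHom.id H) g (key g)
  have h3 := e (x * y)
  rw [map_mul, e x, e y] at h3
  exact (congrArg Subtype.val h3).symm

theorem nsmul_index_add_of_central {G : Type*} [AddGroup G] (H : AddSubgroup G)
    (hc : ∀ h ∈ H, ∀ g : G, g + h = h + g) (hi : H.index ≠ 0) (x y : G) :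
    H.index • (x + y) = H.index • x + H.index • y :=
  pow_index_mul_of_central (G := Multiplicative G) (AddSubgroup.toSubgroup H) hc hi x y

theorem nsmul_relIndex_add {Q : Type*} [AddGroup Q] (I K : AddSubgroup Q)
    (hc : ∀ h ∈ I, ∀ g ∈ K, g + h = h + g) (hi : I.relIndex K ≠ 0) {x y : Q}
    (hx : x ∈ K) (hy : y ∈ K) :
    I.relIndex K • (x + y) = I.relIndex K • x + I.relIndex K • y := by
  have := nsmul_index_add_of_central (I.addSubgroupOf K)
    (fun h hh g => Subtype.ext (hc h.1 hh g.1 g.2)) hi ⟨x, hx⟩ ⟨y, hy⟩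
  exact congrArg Subtype.val this

def Good (p m : ℕ) : Prop := m ≠ 0 ∧ ∀ q : ℕ, q.Prime → q ∣ m → p < q

theorem Good.one (p : ℕ) : Good p 1 :=
  ⟨one_ne_zero, fun _ hq h => absurd (Nat.dvd_one.1 h) hq.one_lt.ne'⟩

theorem Good.mul {p m n : ℕ} (hm : Good p m) (hn : Good p n) : Good p (m * n) :=
  ⟨mul_ne_zero hm.1 hn.1, fun q hq h => (hq.dvd_mul.1 h).elim (hm.2 q hq) (hn.2 q hq)⟩

theorem Good.of_dvd {p m n : ℕ} (hm : Good p m) (h : n ∣ m) : Good p n :=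
  ⟨fun h0 => hm.1 (by subst h0; exact Nat.eq_zero_of_zero_dvd h),
    fun q hq hqn => hm.2 q hq (hqn.trans h)⟩

theorem Good.of_prime {p q : ℕ} (hq : q.Prime) (h : p < q) : Good p q :=
  ⟨hq.ne_zero, fun r hr hrq => by rwa [(Nat.prime_dvd_prime_iff_eq hr hq).1 hrq]⟩

/-- unipotence of the exponent `n` relative to `ℤ/q`. -/
def Rigid (q n : ℕ) : Prop := ∀ k : ℤ, (q : ℤ) ∣ k ^ n - 1 → (q : ℤ) ∣ k - 1

theorem rigid_of_coprime {q n : ℕ} (hq : q.Prime) (hn : n ≠ 0) (h : n.Coprime (q - 1)) :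
    Rigid q n := by
  intro k hk
  have := Fact.mk hq
  have h1 : ((k : ZMod q)) ^ n = 1 := by
    have := (ZMod.intCast_zmod_eq_zero_iff_dvd _ q).2 hk
    push_cast at this
    exact sub_eq_zero.1 this
  have h0 : (k : ZMod q) ≠ 0 := by
    intro h0; rw [h0, zero_pow hn] at h1; exact zero_ne_one h1
  have h2 := ZMod.pow_card_sub_one_eq_one h0
  have h3 : orderOf (k : ZMod q) ∣ 1 := by
    rw [← h]
    exact Nat.dvd_gcd (orderOf_dvd_of_pow_eq_one h1) (orderOf_dvd_of_pow_eq_one h2)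
  have h4 := orderOf_eq_one_iff.1 (Nat.dvd_one.1 h3)
  rw [← ZMod.intCast_zmod_eq_zero_iff_dvd]
  push_cast
  rw [h4, sub_self]

theorem rigid_self {q : ℕ} (hq : q.Prime) : Rigid q q :=
  rigid_of_coprime hq hq.ne_zero (by
    rw [hq.coprime_iff_not_dvd]
    intro h
    have := Nat.le_of_dvd (Nat.sub_pos_of_lt hq.one_lt) h
    have := hq.one_lt
    omega)

theorem Good.rigid {p q n : ℕ} (hp : p.Prime) (hn : Good p n) (hq : q = 0 ∨ (q.Prime ∧ q ≤ p)) :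
    Rigid q n := by
  rcases hq with rfl | ⟨hq, hqp⟩
  · intro k hk
    have h1 : k ^ n = 1 := by simpa [sub_eq_zero] using hk
    have hodd : Odd n := by
      rw [← Nat.not_even_iff_odd, even_iff_two_dvd]
      intro h
      have := hn.2 2 Nat.prime_two h
      have := hp.two_le
      omega
    have : k = 1 := by
      have h2 : k ^ n = 1 ^ n := by rw [h1, one_pow]
      exact hodd.strictMono_pow.injective h2
    simp [this]
  · refine rigid_of_coprime hq hn.1 (Nat.Coprime.symm ?_)
    refine Nat.Coprime.symm (Nat.coprime_of_dvd ?_)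
    intro r hr h1 h2
    have := hn.2 r hr h1
    have := Nat.le_of_dvd (Nat.sub_pos_of_lt hq.one_lt) h2
    omega

theorem Good.dvd_cancel {p q n : ℕ} (hn : Good p n) (hq : q = 0 ∨ (q.Prime ∧ q ≤ p)) {c : ℤ}
    (h : (q : ℤ) ∣ n * c) : (q : ℤ) ∣ c := by
  rcases hq with rfl | ⟨hq, hqp⟩
  · have hn1 := hn.1
    simp_all
  · refine ((Nat.prime_iff_prime_int.1 hq).dvd_or_dvd h).resolve_left ?_
    intro h1
    have := hn.2 q hq (Int.natCast_dvd_natCast.1 h1)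
    omega

end helpers

section brace
variable {B : Type*} [SkewBrace B]

theorem lam_add (a b c : B) : lam a (b + c) = lam a b + lam a c := by
  simp only [lam, skew_distrib, add_assoc]

/-- `λ_a` as an additive endomorphism. -/
def lamHom (a : B) : B →+ B := AddMonoidHom.mk' (lam a) (lam_add a)

@[simp] theorem lamHom_apply (a b : B) : lamHom a b = lam a b := rfl

theorem lam_neg (a b : B) : lam a (-b) = -lam a b := map_neg (lamHom a) b

theorem lam_nsmul (a b : B) (n : ℕ) : lam a (n • b) = n • lam a b := map_nsmul (lamHom a) n b

theorem mul_eq_add_lam (a b : B) : a * b = a + lam a b := by simp [lam]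

theorem lam_mul (a b c : B) : lam (a * b) c = lam a (lam b c) := by
  have h : lam a (lam b c) = lam a (-b) + lam a (b * c) := lam_add a _ _
  rw [h, lam_neg]
  simp [lam, mul_assoc, add_assoc]

theorem lam_one (c : B) : lam 1 c = c := by
  rw [lam, one_mul, one_eq_zero, neg_zero, zero_add]

theorem lam_inv_lam (a c : B) : lam a⁻¹ (lam a c) = c := by
  rw [← lam_mul, inv_mul_cancel, lam_one]

theorem inv_eq_neg_lam (a : B) : a⁻¹ = -lam a⁻¹ a := by
  simp [lam, one_eq_zero (B := B)]

theorem lam_iterate (a c : B) (n : ℕ) : (lamHom a)^[n] c = lam (a ^ n) c := by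
  induction n with
  | zero => simp [lam_one]
  | succ n ih => rw [Function.iterate_succ_apply', ih, pow_succ', lam_mul]; rfl

theorem inv_mul_mem_iff (J : BraceIdeal B) (a b : B) :
    a⁻¹ * b ∈ J.carrier ↔ -a + b ∈ J.carrier := by
  have h : lam a (a⁻¹ * b) = -a + b := by simp [lam]
  constructor
  · intro h1; rw [← h]; exact J.lam_mem a h1
  · intro h1
    rw [← lam_inv_lam a (a⁻¹ * b), h]; exact J.lam_mem _ h1

instance (J : BraceIdeal B) : J.addSubgroup.Normal := ⟨fun _ h b => J.addConj_mem b h⟩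

instance (J : BraceIdeal B) : J.subgroup.Normal := ⟨fun _ h b => J.mulConj_mem b h⟩

theorem relIndex_mul_eq (J I : BraceIdeal B) :
    J.subgroup.relIndex I.subgroup = J.addSubgroup.relIndex I.addSubgroup := by
  refine Nat.card_congr (Quotient.congr (Equiv.refl I.carrier) ?_)
  intro a b
  refine (QuotientGroup.leftRel_apply (s := J.subgroup.subgroupOf I.subgroup)).trans
    (Iff.trans ?_ (QuotientAddGroup.leftRel_apply
      (s := J.addSubgroup.addSubgroupOf I.addSubgroup)).symm)
  exact inv_mul_mem_iff J a.1 b.1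

theorem nsmul_relIndex_mem (I K : BraceIdeal B) {x : B} (hx : x ∈ K.carrier) :
    I.addSubgroup.relIndex K.addSubgroup • x ∈ I.carrier :=
  (I.addSubgroup.addSubgroupOf K.addSubgroup).nsmul_index_mem ⟨x, hx⟩

theorem pow_relIndex_mem (I K : BraceIdeal B) {x : B} (hx : x ∈ K.carrier) :
    x ^ I.addSubgroup.relIndex K.addSubgroup ∈ I.carrier := by
  rw [← relIndex_mul_eq]
  exact (I.subgroup.subgroupOf K.subgroup).pow_index_mem ⟨x, hx⟩

theorem pow_mem' (I : BraceIdeal B) {x : B} (hx : x ∈ I.carrier) (n : ℕ) :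
    x ^ n ∈ I.carrier := I.subgroup.pow_mem hx n

theorem nsmul_mem' (I : BraceIdeal B) {x : B} (hx : x ∈ I.carrier) (n : ℕ) :
    n • x ∈ I.carrier := I.addSubgroup.nsmul_mem hx n

end brace

section step
variable {B : Type*} [SkewBrace B]

/-- data of a cyclic factor `I/J` of order `q` (`q = 0`: infinite), seen through a
homomorphism `π` with kernel `J`. -/
structure Cyc {Q : Type*} [AddGroup Q] (J I : BraceIdeal B) (π : B →+ Q) (x0 : B) (q : ℕ) :
    Prop where
  ker : ∀ x, π x = 0 ↔ x ∈ J.carrier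
  le : J.carrier ⊆ I.carrier
  mem : x0 ∈ I.carrier
  gen : ∀ y ∈ I.carrier, ∃ c : ℤ, π y = c • π x0
  ord : ∀ c : ℤ, c • π x0 = 0 ↔ (q : ℤ) ∣ c

variable {Q : Type*} [AddGroup Q] {J I : BraceIdeal B} {π : B →+ Q} {x0 : B} {q : ℕ}

theorem Cyc.comm (h : Cyc J I π x0 q) {a b : B} (ha : a ∈ I.carrier) (hb : b ∈ I.carrier) :
    π a + π b = π b + π a := by
  obtain ⟨c, hc⟩ := h.gen a ha
  obtain ⟨d, hd⟩ := h.gen b hb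
  rw [hc, hd, ← add_zsmul, ← add_zsmul, add_comm]

theorem Cyc.fixed (h : Cyc J I π x0 q) (f : B →+ B)
    (hJ : ∀ x ∈ J.carrier, f x ∈ J.carrier) (hI : ∀ x ∈ I.carrier, f x ∈ I.carrier)
    {n : ℕ} (hn : Rigid q n) (hf : π (f^[n] x0) = π x0) {y : B} (hy : y ∈ I.carrier) :
    π (f y) = π y := by
  obtain ⟨k, hk⟩ := h.gen (f x0) (hI _ h.mem)
  have hcong : ∀ a b : B, π a = π b → π (f a) = π (f b) := by
    intro a b hab
    have h1 : -a + b ∈ J.carrier := by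
      rw [← h.ker]; simp [hab]
    have h2 := (h.ker _).2 (hJ _ h1)
    rw [map_add, map_neg, map_add, map_neg, neg_add_eq_zero] at h2
    exact h2
  have hmul : ∀ y ∈ I.carrier, π (f y) = k • π y := by
    intro y hy
    obtain ⟨c, hc⟩ := h.gen y hy
    have : π y = π (c • x0) := by rw [hc, map_zsmul]
    rw [hcong _ _ this, map_zsmul, map_zsmul, hk, hc, ← mul_zsmul, ← mul_zsmul, mul_comm]
  have hiter : ∀ n : ℕ, f^[n] x0 ∈ I.carrier ∧ π (f^[n] x0) = k ^ n • π x0 := by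
    intro n
    induction n with
    | zero => simp [h.mem]
    | succ n ih =>
      rw [Function.iterate_succ_apply']
      refine ⟨hI _ ih.1, ?_⟩
      rw [hmul _ ih.1, ih.2, ← mul_zsmul, pow_succ']
  rw [(hiter n).2] at hf
  have h1 : (k ^ n - 1) • π x0 = 0 := by rw [sub_zsmul, hf, one_zsmul, add_neg_cancel]
  have h2 := hn k ((h.ord _).1 h1)
  obtain ⟨c, hc⟩ := h.gen y hy
  rw [hmul y hy, hc, ← mul_zsmul]
  have h3 := (h.ord (k * c - c)).2 (by
    have : k * c - c = (k - 1) * c := by ring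
    rw [this]; exact Dvd.dvd.mul_right h2 c)
  rw [sub_zsmul, add_neg_eq_zero] at h3
  exact h3

theorem Cyc.cancel {p : ℕ} (h : Cyc J I π x0 q) (hq : q = 0 ∨ (q.Prime ∧ q ≤ p)) {n : ℕ}
    (hn : Good p n) {z : B} (hz : z ∈ I.carrier) (h0 : n • π z = 0) : π z = 0 := by
  obtain ⟨c, hc⟩ := h.gen z hz
  rw [hc, h.ord]
  refine hn.dvd_cancel hq ((h.ord _).1 ?_)
  rw [mul_comm, mul_zsmul']
  rw [hc] at h0
  simpa using h0

/-- the ideal `J` acts trivially modulo `J`. -/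
theorem lam_triv (hker : ∀ x, π x = 0 ↔ x ∈ J.carrier) {j : B} (hj : j ∈ J.carrier) (y : B) :
    π (lam j y) = π y := by
  have h1 : j * y = y + lam y (y⁻¹ * j * y) := by
    rw [← mul_eq_add_lam]; group
  have h2 : lam y (y⁻¹ * j * y) ∈ J.carrier := by
    have := J.mulConj_mem y⁻¹ hj
    rw [inv_inv] at this
    exact J.lam_mem _ this
  rw [lam, h1, map_add, map_neg, map_add, (hker _).2 hj, (hker _).2 h2]
  simp

/-- The claim proved by descending induction along the chain. -/
def Claim (p : ℕ) (J : BraceIdeal B) : Prop :=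
  ∃ K : BraceIdeal B, J.carrier ⊆ K.carrier ∧
    (∀ x, x ∈ K.carrier ↔ ∃ m, Good p m ∧ m • x ∈ J.carrier) ∧
    (∀ x, x ∈ K.carrier ↔ ∃ m, Good p m ∧ x ^ m ∈ J.carrier) ∧
    Good p (J.addSubgroup.relIndex K.addSubgroup)

theorem claim_big {p : ℕ} (hJI : J.carrier ⊆ I.carrier)
    (hg : Good p (J.addSubgroup.relIndex I.addSubgroup)) (hI : Claim p I) : Claim p J := by
  obtain ⟨K, hIK, hadd, hmul, hgood⟩ := hI
  refine ⟨K, hJI.trans hIK, fun x => ⟨fun hx => ?_, ?_⟩, fun x => ⟨fun hx => ?_, ?_⟩, ?_⟩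
  · refine ⟨_, hg.mul hgood, ?_⟩
    rw [mul_nsmul']
    exact nsmul_relIndex_mem J I (nsmul_relIndex_mem I K hx)
  · rintro ⟨m, hm, h⟩
    exact (hadd x).2 ⟨m, hm, hJI h⟩
  · refine ⟨_, hgood.mul hg, ?_⟩
    rw [pow_mul]
    exact pow_relIndex_mem J I (pow_relIndex_mem I K hx)
  · rintro ⟨m, hm, h⟩
    exact (hmul x).2 ⟨m, hm, hJI h⟩
  · rw [← AddSubgroup.relIndex_mul_relIndex J.addSubgroup I.addSubgroup K.addSubgroup hJI hIK]
    exact hg.mul hgood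

/-- additive conjugation. -/
def conjHom (a : B) : B →+ B :=
  AddMonoidHom.mk' (fun y => a + y + -a) (fun x y => by simp [add_assoc])

theorem conj_iterate (a y : B) (n : ℕ) :
    (conjHom a)^[n] y = n • a + y + -(n • a) := by
  induction n with
  | zero => simp
  | succ n ih =>
    rw [Function.iterate_succ_apply', ih]
    change a + _ + -a = _
    simp [succ_nsmul', add_assoc]

theorem claim_small {p : ℕ} (hp : p.Prime) (h : Cyc J I π x0 q)
    (hq : q = 0 ∨ (q.Prime ∧ q ≤ p))
    (htriv : ∀ a ∈ I.carrier, ∀ b ∈ I.carrier, π (lam a b) = π b)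
    (hI : Claim p I) : Claim p J := by
  obtain ⟨K, hIK, hadd, hmul, hgood⟩ := hI
  set m := I.addSubgroup.relIndex K.addSubgroup with hm
  -- `K` centralizes `I` modulo `J`
  have hcent : ∀ i ∈ I.carrier, ∀ k ∈ K.carrier, π k + π i = π i + π k := by
    intro i hi k hk
    have hk' : m • k ∈ I.carrier := nsmul_relIndex_mem I K hk
    have := h.fixed (conjHom k) (fun x hx => J.addConj_mem k hx)
      (fun x hx => I.addConj_mem k hx) (hgood.rigid hp hq) (by
        rw [conj_iterate, map_add, map_add, h.comm hk' h.mem, map_neg, add_neg_cancel_right]) hi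
    have h2 : π (k + i + -k) = π i := this
    rw [map_add, map_add, map_neg, add_neg_eq_iff_eq_add] at h2
    exact h2
  have hlam : ∀ k ∈ K.carrier, ∀ i ∈ I.carrier, π (lam k i) = π i := by
    intro k hk i hi
    have hk' : k ^ m ∈ I.carrier := pow_relIndex_mem I K hk
    exact h.fixed (lamHom k) (fun x hx => J.lam_mem k hx)
      (fun x hx => I.lam_mem k hx) (hgood.rigid hp hq) (by
        rw [lam_iterate]; exact htriv _ hk' _ h.mem) hi
  have hmI : ∀ x ∈ K.carrier, m • x ∈ I.carrier := fun x hx => nsmul_relIndex_mem I K hx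
  have hhom : ∀ x ∈ K.carrier, ∀ y ∈ K.carrier, π (m • (x + y)) = π (m • x) + π (m • y) := by
    intro x hx y hy
    have hidx : (I.addSubgroup.map π).relIndex (K.addSubgroup.map π) = m := by
      have hkI : π.ker ≤ I.addSubgroup := fun x hx => h.le ((h.ker x).1 hx)
      have hkK : π.ker ≤ K.addSubgroup := hkI.trans hIK
      rw [AddSubgroup.relIndex_map_map, sup_of_le_left hkI, sup_of_le_left hkK]
    have := nsmul_relIndex_add (I.addSubgroup.map π) (K.addSubgroup.map π) (by
        rintro _ ⟨i, hi, rfl⟩ _ ⟨k, hk, rfl⟩; exact hcent i hi k hk)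
      (by rw [hidx]; exact hgood.1) (AddSubgroup.mem_map_of_mem π (K := K.addSubgroup) hx)
      (AddSubgroup.mem_map_of_mem π (K := K.addSubgroup) hy)
    rw [hidx] at this
    simpa only [map_nsmul, map_add] using this
  have hhommul : ∀ x ∈ K.carrier, ∀ y ∈ K.carrier, π (m • (x * y)) = π (m • x) + π (m • y) := by
    intro x hx y hy
    rw [mul_eq_add_lam, hhom x hx _ (K.lam_mem x hy), ← lam_nsmul, hlam x hx _ (hmI y hy)]
  have hhompow : ∀ x ∈ K.carrier, ∀ n : ℕ, π (m • (x ^ n)) = n • π (m • x) := by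
    intro x hx n
    induction n with
    | zero => simp [one_eq_zero]
    | succ n ih => rw [pow_succ, hhommul _ (pow_mem' K hx n) x hx, ih, succ_nsmul]
  let S : Set B := {x | x ∈ K.carrier ∧ π (m • x) = 0}
  have Sadd : ∀ {a b : B}, a ∈ S → b ∈ S → a + b ∈ S := by
    rintro a b ⟨ha, ha'⟩ ⟨hb, hb'⟩
    exact ⟨K.add_mem ha hb, by rw [hhom a ha b hb, ha', hb', add_zero]⟩
  have Sneg : ∀ {a : B}, a ∈ S → -a ∈ S := by
    rintro a ⟨ha, ha'⟩
    exact ⟨K.neg_mem ha, by rw [neg_nsmul, map_neg, ha', neg_zero]⟩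
  have Slam : ∀ (b : B) {a : B}, a ∈ S → lam b a ∈ S := by
    rintro b a ⟨ha, ha'⟩
    refine ⟨K.lam_mem b ha, ?_⟩
    rw [← lam_nsmul, h.ker]
    exact J.lam_mem b ((h.ker _).1 ha')
  have Smul : ∀ {a b : B}, a ∈ S → b ∈ S → a * b ∈ S := by
    intro a b ha hb
    rw [mul_eq_add_lam]; exact Sadd ha (Slam a hb)
  have Sinv : ∀ {a : B}, a ∈ S → a⁻¹ ∈ S := by
    intro a ha
    rw [inv_eq_neg_lam]; exact Sneg (Slam _ ha)
  have Szero : (0 : B) ∈ S := ⟨K.zero_mem, by simp⟩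
  have Spow : ∀ {a : B}, a ∈ S → ∀ n : ℕ, a ^ n ∈ S := by
    intro a ha n
    induction n with
    | zero => rw [pow_zero, one_eq_zero]; exact Szero
    | succ n ih => rw [pow_succ]; exact Smul ih ha
  have SI : ∀ z ∈ S, z ∈ I.carrier → z ∈ J.carrier := by
    rintro z ⟨_, hz⟩ hzI
    rw [← h.ker]
    exact h.cancel hq hgood hzI (by rw [← map_nsmul]; exact hz)
  have Schar : ∀ x, x ∈ S ↔ ∃ n, Good p n ∧ n • x ∈ J.carrier := by
    intro x
    constructor
    · rintro ⟨_, hx⟩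
      exact ⟨m, hgood, (h.ker _).1 hx⟩
    · rintro ⟨n, hn, hx⟩
      have hxK : x ∈ K.carrier := (hadd x).2 ⟨n, hn, h.le hx⟩
      refine ⟨hxK, h.cancel hq hn (hmI x hxK) ?_⟩
      rw [← map_nsmul, nsmul_left_comm, map_nsmul, (h.ker _).2 hx, nsmul_zero]
  have Scharm : ∀ x, x ∈ S ↔ ∃ n, Good p n ∧ x ^ n ∈ J.carrier := by
    intro x
    constructor
    · intro hx
      exact ⟨m, hgood, SI _ (Spow hx m) (pow_relIndex_mem I K hx.1)⟩
    · rintro ⟨n, hn, hx⟩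
      have hxK : x ∈ K.carrier := (hmul x).2 ⟨n, hn, h.le hx⟩
      refine ⟨hxK, h.cancel hq hn (hmI x hxK) ?_⟩
      rw [← hhompow x hxK, map_nsmul, (h.ker _).2 hx, nsmul_zero]
  let K' : BraceIdeal B :=
    { carrier := S
      zero_mem := Szero
      add_mem := Sadd
      neg_mem := Sneg
      mul_mem := Smul
      inv_mem := Sinv
      lam_mem := Slam
      addConj_mem := by
        intro b a ha
        obtain ⟨n, hn, hx⟩ := (Schar a).1 ha
        refine (Schar _).2 ⟨n, hn, ?_⟩
        have : n • (b + a + -b) = b + n • a + -b :=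
          (map_nsmul (conjHom b) n a).symm
        rw [this]
        exact J.addConj_mem b hx
      mulConj_mem := by
        intro b a ha
        obtain ⟨n, hn, hx⟩ := (Scharm a).1 ha
        refine (Scharm _).2 ⟨n, hn, ?_⟩
        rw [conj_pow]
        exact J.mulConj_mem b hx }
  have hJK' : J.carrier ⊆ S := fun x hx => (Schar x).2 ⟨1, Good.one p, by rwa [one_nsmul]⟩
  refine ⟨K', hJK', Schar, Scharm, ?_⟩
  have e : J.addSubgroup.relIndex K'.addSubgroup = I.addSubgroup.relIndex K'.addSubgroup := by
    rw [← AddSubgroup.inf_relIndex_right I.addSubgroup]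
    congr 1
    ext z
    exact ⟨fun hz => ⟨h.le hz, hJK' hz⟩, fun hz => SI z hz.2 hz.1⟩
  have hle : K'.addSubgroup ≤ K.addSubgroup := fun z hz => hz.1
  rw [e, ← AddSubgroup.relIndex_addSubgroupOf hle]
  exact hgood.of_dvd (AddSubgroup.relIndex_dvd_index_of_normal _ _)

theorem claim_step {p : ℕ} (hp : p.Prime) (hJI : J.carrier ⊆ I.carrier)
    (hs : (QuotAddInfCyclic J.carrier I.carrier ∧ ∀ x ∈ I.carrier, MemSocQuot J.carrier x) ∨
      ∃ q : ℕ, QuotPrimeOrder J.carrier I.carrier q)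
    (hI : Claim p I) : Claim p J := by
  let π : B →+ B ⧸ J.addSubgroup := QuotientAddGroup.mk' J.addSubgroup
  have hker : ∀ x, π x = 0 ↔ x ∈ J.carrier := fun x => QuotientAddGroup.eq_zero_iff x
  have hgen : ∀ x0 y : B, (∃ n : ℤ, -(n • x0) + y ∈ J.carrier) → ∃ c : ℤ, π y = c • π x0 := by
    rintro x0 y ⟨n, hn⟩
    refine ⟨n, ?_⟩
    rw [← hker, map_add, map_neg, neg_add_eq_zero, map_zsmul] at hn
    exact hn.symm
  rcases hs with ⟨⟨x0, hx0, hg, ho⟩, hsoc⟩ | ⟨q, hq, x0, hx0, hx0J, hqx, hg⟩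
  · have hc : Cyc J I π x0 0 := ⟨hker, hJI, hx0, fun y hy => hgen _ _ (hg y hy), fun c => by
      rw [← map_zsmul, hker]
      constructor
      · intro h; simp [ho c h]
      · intro h
        have : c = 0 := by simpa using h
        rw [this, zero_zsmul]; exact J.zero_mem⟩
    refine claim_small hp hc (Or.inl rfl) ?_ hI
    intro a ha b _
    have := (hsoc a ha).2.1 b (Set.mem_univ b)
    rw [← hker, map_add, map_neg, neg_add_eq_zero] at this
    exact this.symm
  · have hord : addOrderOf (π x0) = q := by
      have := Fact.mk hq
      refine addOrderOf_eq_prime ?_ ?_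
      · rw [← map_nsmul, hker]; exact hqx
      · rw [Ne, hker]; exact hx0J
    have hc : Cyc J I π x0 q := ⟨hker, hJI, hx0, fun y hy => hgen _ _ (hg y hy), fun c => by
      rw [← hord, addOrderOf_dvd_iff_zsmul_eq_zero]⟩
    have hidx : J.addSubgroup.relIndex I.addSubgroup = q := by
      have h1 : J.addSubgroup = π.ker := (QuotientAddGroup.ker_mk' _).symm
      have h2 : I.addSubgroup.map π = AddSubgroup.zmultiples (π x0) := by
        ext z
        constructor
        · rintro ⟨y, hy, rfl⟩
          obtain ⟨c, e⟩ := hc.gen y hy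
          exact ⟨c, e.symm⟩
        · rintro ⟨c, rfl⟩
          exact ⟨c • x0, I.addSubgroup.zsmul_mem hx0 c, map_zsmul π c x0⟩
      rw [h1, AddSubgroup.relIndex_ker, h2, Nat.card_zmultiples, hord]
    rcases lt_or_ge p q with hpq | hpq
    · exact claim_big hJI (by rw [hidx]; exact Good.of_prime hq hpq) hI
    · refine claim_small hp hc (Or.inr ⟨hq, hpq⟩) ?_ hI
      intro a ha b hb
      refine hc.fixed (lamHom a) (fun x hx => J.lam_mem a hx)
        (fun x hx => I.lam_mem a hx) (rigid_self hq) ?_ hb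
      rw [lam_iterate]
      refine lam_triv hker ?_ _
      have := pow_relIndex_mem J I ha
      rwa [hidx] at this

end step

/-- In a supersoluble brace `B`, for every prime `p`, `U_p^+(B) = U_p^·(B)` and this
set is an ideal of `B`. -/
theorem Uadd_eq_Umul_and_ideal (B : Type*) [SkewBrace B] (hB : IsSupersoluble B)
    (p : ℕ) (hp : p.Prime) :
    Uadd p B = Umul p B ∧ ∃ I : BraceIdeal B, I.carrier = Uadd p B := by
  obtain ⟨n, I, h0, hn, hle, hs⟩ := hB
  have key : ∀ d i, i + d = n → Claim p (I i) := by
    intro d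
    induction d with
    | zero =>
      intro i hi
      have hin : i = n := hi
      subst hin
      refine ⟨I i, subset_rfl, fun x => ?_, fun x => ?_, ?_⟩
      · simp only [hn, Set.mem_univ, and_true, true_iff]
        exact ⟨1, Good.one p⟩
      · simp only [hn, Set.mem_univ, and_true, true_iff]
        exact ⟨1, Good.one p⟩
      · rw [AddSubgroup.relIndex_self]; exact Good.one p
    | succ d ih =>
      intro i hi
      exact claim_step hp (hle i (by omega)) (hs i (by omega)) (ih (i + 1) (by omega))
  obtain ⟨K, -, hadd, hmul, -⟩ := key n 0 (zero_add n)
  have e1 : K.carrier = Uadd p B := by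
    ext x
    rw [hadd, h0]
    constructor
    · rintro ⟨m, hm, hx⟩
      exact hm.of_dvd (addOrderOf_dvd_of_nsmul_eq_zero hx)
    · intro hx
      exact ⟨addOrderOf x, hx, addOrderOf_nsmul_eq_zero x⟩
  have e2 : K.carrier = Umul p B := by
    ext x
    rw [hmul, h0]
    constructor
    · rintro ⟨m, hm, hx⟩
      exact hm.of_dvd (orderOf_dvd_of_pow_eq_one (hx.trans one_eq_zero.symm))
    · intro hx
      exact ⟨orderOf x, hx, (pow_orderOf_eq_one x).trans one_eq_zero⟩
  exact ⟨e1.symm.trans e2, K, e1⟩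

end SkewBrace
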